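/- arXiv:2206.11835 — 2 statements merged into one kernel-verified Lean document; each statement's English description precedes it below -/
import Mathlib

section
/- Let f be a holomorphic function on the product (Δ*)^ℓ × Δ^(n−ℓ) of punctured unit disks and unit disks. If for some real p with 0 < p < ∞ and some constant C > 0 the integral of |f|^p over (Δ*)^ℓ × Δ^(n−ℓ) with respect to Lebesgue measure is at most C, then f extends to a meromorphic function on Δ^n; more precisely, (z₁⋯z_ℓ)^⌈2/p⌉ · f extends to a holomorphic function on Δ^n. -/
open MeasureTheory

/-!
Since `|f|^p` is subharmonic on complex lines, averaging over rotations bounds `|f z|^p` by the mean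
of `|f|^p` over any translate `z + P ⊆ S` of a balanced set `P`. For `P` a polydisc of radii
comparable to `|z i|` for `i < l` and to `1` otherwise this reads `|f z|^p ≲ ∏_{i < l} |z i|⁻²`, so
that `(∏_{i < l} z i)^⌈2/p⌉ * f` is bounded near every point of the polydisc. The singularities are
then removed by averaging over circles in the diagonal direction: each diagonal line meets the
coordinate hyperplanes in finitely many points, so the one-variable removable singularity theorem
suffices.
-/

open Filter Metric Set
open scoped Real Topology ENNReal

section Submean

theorem exp_one_mul_mul_log_le_rpow {x p : ℝ} (hx : 0 ≤ x) (hp : 0 < p) :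
    Real.exp 1 * (p * Real.log x) ≤ x ^ p := by
  rcases hx.eq_or_lt with rfl | hx
  · simp [hp.ne']
  calc Real.exp 1 * (p * Real.log x)
    _ ≤ Real.exp 1 * Real.exp (p * Real.log x - 1) := by
        gcongr
        linarith [Real.add_one_le_exp (p * Real.log x - 1)]
    _ = x ^ p := by rw [← Real.exp_add, Real.rpow_def_of_pos hx]; ring_nf

theorem log_norm_le_circleAverage_log_norm {φ : ℂ → ℂ} {c : ℂ} {R : ℝ}
    (hφ : AnalyticOnNhd ℂ φ (closedBall c |R|)) (hc : φ c ≠ 0) :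
    Real.log ‖φ c‖ ≤ Real.circleAverage (fun z => Real.log ‖φ z‖) c R := by
  rcases eq_or_ne R 0 with rfl | hR
  · simp
  rw [hφ.circleAverage_log_norm hR hc, le_add_iff_nonneg_left]
  refine finsum_nonneg fun u => ?_
  by_cases hu : u ∈ closedBall c |R|
  · refine mul_nonneg (mod_cast MeromorphicOn.AnalyticOnNhd.divisor_nonneg hφ u) ?_
    rcases eq_or_ne c u with rfl | huc
    · simp
    · have hcu : 0 < ‖c - u‖ := norm_pos_iff.2 (sub_ne_zero.2 huc)
      rw [← Real.log_abs, abs_mul, abs_inv, abs_norm, ← div_eq_mul_inv]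
      refine Real.log_nonneg ((one_le_div hcu).2 ?_)
      simpa only [mem_closedBall', dist_eq_norm] using hu
  · simp [Function.locallyFinsuppWithin.apply_eq_zero_of_notMem _ hu]

theorem norm_rpow_le_circleAverage_norm_rpow_of_complex {φ : ℂ → ℂ} {c : ℂ} {R p : ℝ} (hp : 0 < p)
    (hφ : AnalyticOnNhd ℂ φ (closedBall c |R|)) :
    ‖φ c‖ ^ p ≤ Real.circleAverage (fun z => ‖φ z‖ ^ p) c R := by
  rcases eq_or_ne (φ c) 0 with h0 | h0
  · rw [h0, norm_zero, Real.zero_rpow hp.ne']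
    exact Real.circleAverage_nonneg_of_nonneg fun _ _ => by positivity
  have hφS : AnalyticOnNhd ℂ φ (sphere c |R|) := hφ.mono sphere_subset_closedBall
  -- `exp 1 * (p * log x) ≤ x ^ p` is an equality at `x = exp (1 / p)`, so we rescale `‖φ c‖` to it.
  obtain ⟨b, hb, hbc⟩ : ∃ b : ℝ, 0 < b ∧ b * ‖φ c‖ = Real.exp (1 / p) :=
    ⟨Real.exp (1 / p) / ‖φ c‖, by positivity, by field_simp⟩
  have hnorm (z : ℂ) : ‖(b : ℂ) * φ z‖ = b * ‖φ z‖ := by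
    rw [norm_mul, Complex.norm_of_nonneg hb.le]
  have hψ : AnalyticOnNhd ℂ (fun z => (b : ℂ) * φ z) (closedBall c |R|) :=
    analyticOnNhd_const.mul hφ
  have hlog := log_norm_le_circleAverage_log_norm hψ (by simp [hb.ne', h0])
  have hlogint : CircleIntegrable (fun z => Real.log ‖(b : ℂ) * φ z‖) c R :=
    MeromorphicOn.circleIntegrable_log_norm
      (hψ.mono sphere_subset_closedBall).meromorphicOn
  have hpowint : CircleIntegrable (fun z => ‖φ z‖ ^ p) c R :=
    (hφS.continuousOn.norm.rpow_const fun _ _ => Or.inr hp.le).circleIntegrable'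
  simp only [hnorm, hbc, Real.log_exp] at hlog hlogint
  refine le_of_mul_le_mul_left (a := b ^ p) ?_ (by positivity)
  calc b ^ p * ‖φ c‖ ^ p
    _ = Real.exp 1 * (p * (1 / p)) := by
        rw [← Real.mul_rpow hb.le (norm_nonneg _), hbc, ← Real.exp_mul, mul_one_div_cancel hp.ne',
          one_div_mul_cancel hp.ne', mul_one]
    _ ≤ (Real.exp 1 * p) * Real.circleAverage (fun z => Real.log (b * ‖φ z‖)) c R := by
        rw [← mul_assoc]
        gcongr
    _ = Real.circleAverage (fun z => (Real.exp 1 * p) • Real.log (b * ‖φ z‖)) c R := by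
        rw [Real.circleAverage_fun_smul, smul_eq_mul]
    _ ≤ Real.circleAverage (fun z => b ^ p • ‖φ z‖ ^ p) c R := by
        refine Real.circleAverage_mono hlogint.const_smul hpowint.const_smul fun z _ => ?_
        rw [smul_eq_mul, smul_eq_mul, ← Real.mul_rpow hb.le (norm_nonneg _), mul_assoc]
        exact exp_one_mul_mul_log_le_rpow (by positivity) hp
    _ = b ^ p * Real.circleAverage (fun z => ‖φ z‖ ^ p) c R := by
        rw [Real.circleAverage_fun_smul, smul_eq_mul]

variable {F : Type*} [NormedAddCommGroup F] [NormedSpace ℂ F]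

theorem norm_rpow_le_circleAverage_norm_rpow {φ : ℂ → F} {c : ℂ} {R p : ℝ} (hp : 0 < p)
    (hφ : AnalyticOnNhd ℂ φ (closedBall c |R|)) :
    ‖φ c‖ ^ p ≤ Real.circleAverage (fun z => ‖φ z‖ ^ p) c R := by
  obtain ⟨L, hL, hLc⟩ := exists_dual_vector'' ℂ (φ c)
  have hLφ : AnalyticOnNhd ℂ (fun z => L (φ z)) (closedBall c |R|) :=
    L.comp_analyticOnNhd hφ
  have hint {ψ : ℂ → ℝ} (hψ : ContinuousOn ψ (closedBall c |R|)) :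
      CircleIntegrable (fun z => ψ z ^ p) c R :=
    ((hψ.mono sphere_subset_closedBall).rpow_const fun _ _ => Or.inr hp.le).circleIntegrable'
  calc ‖φ c‖ ^ p
    _ = ‖L (φ c)‖ ^ p := by rw [hLc, RCLike.norm_ofReal, abs_norm]
    _ ≤ Real.circleAverage (fun z => ‖L (φ z)‖ ^ p) c R :=
        norm_rpow_le_circleAverage_norm_rpow_of_complex hp hLφ
    _ ≤ Real.circleAverage (fun z => ‖φ z‖ ^ p) c R := by
        refine Real.circleAverage_mono (hint hLφ.continuousOn.norm) (hint hφ.continuousOn.norm)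
          fun z _ => ?_
        gcongr
        exact L.le_of_opNorm_le hL (φ z) |>.trans_eq (one_mul _)

theorem ofReal_two_pi_mul_ofReal_norm_rpow_le_setLIntegral {φ : ℂ → F} {c : ℂ} {R p : ℝ}
    (hp : 0 < p) (hφ : AnalyticOnNhd ℂ φ (closedBall c |R|)) :
    ENNReal.ofReal (2 * π) * ENNReal.ofReal (‖φ c‖ ^ p) ≤
      ∫⁻ θ in Ioc 0 (2 * π), ENNReal.ofReal (‖φ (circleMap c R θ)‖ ^ p) := by
  have hint : CircleIntegrable (fun z => ‖φ z‖ ^ p) c R :=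
    ((hφ.continuousOn.mono sphere_subset_closedBall).norm.rpow_const
      fun _ _ => Or.inr hp.le).circleIntegrable'
  have hmean := norm_rpow_le_circleAverage_norm_rpow hp hφ
  rw [Real.circleAverage_def, intervalIntegral.integral_of_le Real.two_pi_pos.le, smul_eq_mul,
    inv_mul_eq_div, le_div_iff₀' Real.two_pi_pos] at hmean
  rw [← ENNReal.ofReal_mul Real.two_pi_pos.le, ← ofReal_integral_eq_lintegral_ofReal]
  · exact ENNReal.ofReal_le_ofReal hmean
  · exact (intervalIntegrable_iff_integrableOn_Ioc_of_le Real.two_pi_pos.le).1 hint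
  · exact .of_forall fun θ => by positivity

end Submean

section Balanced

variable {E F : Type*} [NormedAddCommGroup E] [NormedSpace ℂ E] [FiniteDimensional ℂ E]
  [MeasurableSpace E] [BorelSpace E] {μ : Measure E} [μ.IsAddHaarMeasure]
  [NormedAddCommGroup F] [NormedSpace ℂ F]

theorem measurePreserving_smul_of_norm_eq_one {c : ℂ} (hc : ‖c‖ = 1) :
    MeasurePreserving (fun w : E => c • w) μ μ := by
  have : FiniteDimensional ℝ E := .complexToReal E
  let T : E →ₗ[ℝ] E := (LinearMap.lsmul ℂ E c).restrictScalars ℝ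
  have hdet : |LinearMap.det T| = 1 := by
    have hT : LinearMap.lsmul ℂ E c = c • LinearMap.id := rfl
    rw [LinearMap.det_restrictScalars, hT, LinearMap.det_smul, LinearMap.det_id, mul_one, map_pow,
      Algebra.norm_complex_apply, Complex.normSq_eq_norm_sq, hc]
    simp
  refine ⟨by fun_prop, ?_⟩
  have hmap := Measure.map_linearMap_addHaar_eq_smul_addHaar μ (f := T)
    (abs_pos.1 (hdet ▸ one_pos))
  rwa [abs_inv, hdet, inv_one, ENNReal.ofReal_one, one_smul] at hmap

theorem setLIntegral_lintegral_circleMap_smul_of_balanced {P : Set E} (hP : Balanced ℂ P)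
    (hPm : MeasurableSet P) {G : E → ℝ≥0∞} (hG : Measurable G) :
    ∫⁻ w in P, (∫⁻ θ in Ioc 0 (2 * π), G (circleMap 0 1 θ • w)) ∂μ =
      ENNReal.ofReal (2 * π) * ∫⁻ w in P, G w ∂μ := by
  have hrot (θ : ℝ) : ∫⁻ w in P, G (circleMap 0 1 θ • w) ∂μ = ∫⁻ w in P, G w ∂μ := by
    have hθ : ‖circleMap 0 1 θ‖ = 1 := by simp
    have hpre : (fun w : E => circleMap 0 1 θ • w) ⁻¹' P = P :=
      Set.ext fun w => hP.smul_mem_iff (hθ.trans norm_one.symm) |>.trans (by simp)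
    simpa only [hpre] using
      (measurePreserving_smul_of_norm_eq_one (μ := μ) hθ).setLIntegral_comp_preimage hPm hG
  have hmeas : Measurable fun q : E × ℝ => G (circleMap 0 1 q.2 • q.1) := by
    refine hG.comp (Continuous.measurable ?_)
    have := continuous_circleMap 0 1
    fun_prop
  rw [lintegral_lintegral_swap hmeas.aemeasurable]
  simp only [hrot, setLIntegral_const, Real.volume_Ioc, sub_zero, mul_comm]

theorem measure_mul_ofReal_norm_rpow_le_setLIntegral [CompleteSpace F] {U P : Set E} {f : E → F}
    {z : E} {p : ℝ} (hp : 0 < p) (hU : IsOpen U) (hf : DifferentiableOn ℂ f U)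
    (hPm : MeasurableSet P) (hP : Balanced ℂ P) (hPU : ∀ w ∈ P, z + w ∈ U) :
    μ P * ENNReal.ofReal (‖f z‖ ^ p) ≤ ∫⁻ w in U, ENNReal.ofReal (‖f w‖ ^ p) ∂μ := by
  let G : E → ℝ≥0∞ := U.indicator fun w => ENNReal.ofReal (‖f w‖ ^ p)
  have hGU : EqOn G (fun w => ENNReal.ofReal (‖f w‖ ^ p)) U := eqOn_indicator
  have hG : Measurable G := by
    classical
    rw [show G = U.piecewise (fun w => ENNReal.ofReal (‖f w‖ ^ p)) 0 from
      piecewise_eq_indicator.symm]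
    exact (ENNReal.continuous_ofReal.comp_continuousOn <|
      hf.continuousOn.norm.rpow_const fun _ _ => Or.inr hp.le).measurable_piecewise
        continuousOn_const hU.measurableSet
  have hcircle {w : E} (hw : w ∈ P) : ENNReal.ofReal (2 * π) * ENNReal.ofReal (‖f z‖ ^ p) ≤
      ∫⁻ θ in Ioc 0 (2 * π), G (z + circleMap 0 1 θ • w) := by
    let V : Set ℂ := {a | z + a • w ∈ U}
    have hV : IsOpen V := hU.preimage (by fun_prop)
    have hdisk {a : ℂ} (ha : a ∈ closedBall (0 : ℂ) |1|) : z + a • w ∈ U :=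
      hPU _ (hP.smul_mem (by simpa using ha) hw)
    have hfline : DifferentiableOn ℂ (fun a : ℂ => f (z + a • w)) V :=
      hf.comp (by fun_prop) fun _ ha => ha
    have hmean := ofReal_two_pi_mul_ofReal_norm_rpow_le_setLIntegral (R := 1) hp
      ((hfline.analyticOnNhd hV).mono fun _ => hdisk)
    simp only [zero_smul, add_zero] at hmean
    exact hmean.trans_eq <| lintegral_congr fun θ =>
      (hGU (hdisk (a := circleMap 0 1 θ) (by simp))).symm
  have hmul : ENNReal.ofReal (2 * π) * (μ P * ENNReal.ofReal (‖f z‖ ^ p)) ≤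
      ENNReal.ofReal (2 * π) * ∫⁻ w in P, G (z + w) ∂μ := by
    rw [← setLIntegral_lintegral_circleMap_smul_of_balanced hP hPm (by fun_prop), mul_left_comm,
      mul_comm (μ P), ← setLIntegral_const]
    exact setLIntegral_mono' hPm fun w => hcircle
  calc μ P * ENNReal.ofReal (‖f z‖ ^ p)
    _ ≤ ∫⁻ w in P, G (z + w) ∂μ :=
        (ENNReal.mul_le_mul_iff_right (by simp [Real.pi_pos]) ENNReal.ofReal_ne_top).1 hmul
    _ ≤ ∫⁻ w, G (z + w) ∂μ := setLIntegral_le_lintegral _ _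
    _ = ∫⁻ w, G w ∂μ := lintegral_add_left_eq_self G z
    _ = ∫⁻ w in U, ENNReal.ofReal (‖f w‖ ^ p) ∂μ := lintegral_indicator hU.measurableSet _

end Balanced

section CircleAverage

variable {E F : Type*} [NormedAddCommGroup E] [NormedSpace ℂ E] [NormedAddCommGroup F]
  [NormedSpace ℂ F]

theorem norm_fderiv_add_sub_fderiv_le {f : E → F} {x h : E} {r M : ℝ}
    (hf : DifferentiableOn ℂ f (ball x (4 * r)))
    (hM : ∀ u ∈ ball x (4 * r), ∀ w ∈ ball x (4 * r), dist (f u) (f w) ≤ M) (hh : ‖h‖ < r) :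
    ‖fderiv ℂ f (x + h) - fderiv ℂ f x‖ ≤ M / r ^ 2 * ‖h‖ := by
  have hr : 0 < r := (norm_nonneg h).trans_lt hh
  have hlip {u : E} (hu : u ∈ ball x r) : ‖f (u + h) - f u‖ ≤ M / (2 * r) * ‖h‖ := by
    have hsub : ball u (2 * r) ⊆ ball x (4 * r) := ball_subset_ball' (by linarith [mem_ball.1 hu])
    have huh : u + h ∈ ball u (2 * r) := by rw [mem_ball, dist_self_add_left]; linarith
    simpa only [dist_eq_norm, add_sub_cancel_left] using
      Complex.dist_le_div_mul_dist_of_mapsTo_ball (hf.mono hsub)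
        (fun w hw => hM w (hsub hw) u (hsub (mem_ball_self (by positivity)))) huh
  have hdiff {u : E} (hu : u ∈ ball x r) :
      DifferentiableAt ℂ f u ∧ DifferentiableAt ℂ (fun u => f (u + h)) u := by
    have hu' := mem_ball.1 hu
    have hudist : dist (u + h) u = ‖h‖ := dist_self_add_left ..
    constructor
    · exact hf.differentiableAt (isOpen_ball.mem_nhds (mem_ball.2 (by linarith)))
    · refine (differentiableAt_comp_add_right h).2 (hf.differentiableAt (isOpen_ball.mem_nhds ?_))
      exact mem_ball.2 (by linarith [dist_triangle (u + h) u x])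
  have hx : x ∈ ball x r := mem_ball_self hr
  calc ‖fderiv ℂ f (x + h) - fderiv ℂ f x‖
    _ = ‖fderiv ℂ (fun u => f (u + h) - f u) x‖ := by
        rw [fderiv_fun_sub (hdiff hx).2 (hdiff hx).1, fderiv_comp_add_right]
    _ ≤ (M / (2 * r) * ‖h‖ + M / (2 * r) * ‖h‖) / r := by
        refine Complex.norm_fderiv_le_div_of_mapsTo_ball
          (fun u hu => ((hdiff hu).2.sub (hdiff hu).1).differentiableWithinAt) (fun u hu => ?_) hr
        rw [mem_closedBall, dist_eq_norm]
        exact norm_sub_le_of_le (hlip hu) (hlip hx)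
    _ = M / r ^ 2 * ‖h‖ := by field_simp; ring

theorem continuousOn_fderiv_of_isOpen {f : E → F} {U : Set E} (hU : IsOpen U)
    (hf : DifferentiableOn ℂ f U) : ContinuousOn (fderiv ℂ f) U := by
  refine continuousOn_of_forall_continuousAt fun x hx => ?_
  have hUx : U ∈ 𝓝 x := hU.mem_nhds hx
  have hfx : ∀ᶠ u in 𝓝 x, dist (f u) (f x) < 1 / 2 :=
    tendsto_nhds.1 (hf.differentiableAt hUx).continuousAt (1 / 2) (by norm_num)
  obtain ⟨ε, hε, hball⟩ := eventually_nhds_iff_ball.1 (hfx.and hUx)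
  have hε4 : 4 * (ε / 4) = ε := by ring
  refine continuousAt_of_locally_lipschitz (r := ε / 4) (by positivity) (1 / (ε / 4) ^ 2)
    fun y hy => ?_
  rw [dist_eq_norm] at hy
  have hbound := norm_fderiv_add_sub_fderiv_le (M := 1) (hf.mono fun u hu => (hball u (hε4 ▸ hu)).2)
    (fun u hu w hw => ?_) hy
  · rwa [add_sub_cancel, ← dist_eq_norm, ← dist_eq_norm] at hbound
  · rw [hε4] at hu hw
    linarith [dist_triangle_right (f u) (f w) (f x), (hball u hu).1, (hball w hw).1]

theorem eventually_forall_mem_of_isCompact {X Y Z : Type*} [TopologicalSpace X]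
    [TopologicalSpace Y] [TopologicalSpace Z] {K : Set Y} (hK : IsCompact K) {U : Set Z}
    (hU : IsOpen U) {γ : X → Y → Z} (hγ : Continuous γ.uncurry) {x : X} (hx : ∀ y ∈ K, γ x y ∈ U) :
    ∀ᶠ u in 𝓝 x, ∀ y ∈ K, γ u y ∈ U :=
  hK.eventually_forall_of_forall_eventually fun y hy =>
    (hγ.tendsto (x, y)).eventually_mem (hU.mem_nhds (hx y hy))

theorem differentiableAt_circleAverage_comp_add_smul {f : E → F} {U : Set E} (hU : IsOpen U)
    (hf : DifferentiableOn ℂ f U) {c : ℂ} {R : ℝ} {z v : E}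
    (hz : ∀ a ∈ sphere c |R|, z + a • v ∈ U) :
    DifferentiableAt ℂ (fun x => Real.circleAverage (fun a => f (x + a • v)) c R) z := by
  let γ : E → ℝ → E := fun x θ => x + circleMap c R θ • v
  have hγ : Continuous γ.uncurry := by
    simp only [γ, Function.uncurry_def]
    fun_prop
  have hγx (x : E) : Continuous (γ x) := hγ.comp (Continuous.prodMk_right x)
  have hγz (θ : ℝ) : γ z θ ∈ U := hz _ (circleMap_mem_sphere' c R θ)
  have hf' := continuousOn_fderiv_of_isOpen hU hf
  have hf'z : Continuous fun θ => fderiv ℂ f (γ z θ) := hf'.comp_continuous (hγx z) hγz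
  obtain ⟨M, hM⟩ := (isCompact_uIcc (a := 0) (b := 2 * π)).exists_bound_of_continuousOn
    hf'z.continuousOn
  have hnhds : ∀ᶠ x in 𝓝 z, ∀ θ ∈ uIcc 0 (2 * π),
      γ x θ ∈ U ∩ fderiv ℂ f ⁻¹' ball 0 (M + 1) :=
    eventually_forall_mem_of_isCompact isCompact_uIcc (hf'.isOpen_inter_preimage hU isOpen_ball) hγ
      fun θ hθ => ⟨hγz θ, mem_ball_zero_iff.2 ((hM θ hθ).trans_lt (lt_add_one M))⟩
  have hfz : Continuous fun θ => f (γ z θ) := hf.continuousOn.comp_continuous (hγx z) hγz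
  simp only [Real.circleAverage_def]
  refine DifferentiableAt.const_smul (HasFDerivAt.differentiableAt <|
    intervalIntegral.hasFDerivAt_integral_of_dominated_of_fderiv_le (𝕜 := ℂ)
    (F := fun x θ => f (γ x θ)) (F' := fun x θ => fderiv ℂ f (γ x θ)) (bound := fun _ => M + 1)
    hnhds (hnhds.mono fun x hx => ?_) (hfz.intervalIntegrable _ _)
    hf'z.aestronglyMeasurable ?_ intervalIntegrable_const ?_) _
  · exact (hf.continuousOn.comp (hγx x).continuousOn fun θ hθ =>
      (hx θ (uIoc_subset_uIcc hθ)).1).aestronglyMeasurable measurableSet_uIoc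
  · exact .of_forall fun θ hθ x hx => (mem_ball_zero_iff.1 (hx θ (uIoc_subset_uIcc hθ)).2).le
  · refine .of_forall fun θ hθ x hx => (hasFDerivAt_comp_add_right _).2 ?_
    exact (hf.differentiableAt (hU.mem_nhds (hx θ (uIoc_subset_uIcc hθ)).1)).hasFDerivAt

end CircleAverage

section RiemannExtension

variable {E F : Type*} [NormedAddCommGroup E] [NormedSpace ℂ E] [NormedAddCommGroup F]
  [NormedSpace ℂ F]

theorem exists_differentiableOn_eqOn_of_locally {f : E → F} {S D : Set E}
    (hf : ContinuousOn f S) (hDS : D ⊆ closure S)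
    (hloc : ∀ z ∈ D, ∃ g : E → F,
      (∀ᶠ x in 𝓝 z, DifferentiableAt ℂ g x) ∧ ∀ᶠ x in 𝓝[S] z, g x = f x) :
    ∃ g : E → F, DifferentiableOn ℂ g D ∧ EqOn g f S := by
  have hlim {z : E} {y : F} (hz : z ∈ closure S) (hy : Tendsto f (𝓝[S] z) (𝓝 y)) :
      limUnder (𝓝[S] z) f = y :=
    have := mem_closure_iff_nhdsWithin_neBot.1 hz
    hy.limUnder_eq
  refine ⟨fun z => limUnder (𝓝[S] z) f, fun z hz => ?_,
    fun z hz => hlim (subset_closure hz) (hf z hz)⟩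
  obtain ⟨g, hg, hgf⟩ := hloc z hz
  refine hg.self_of_nhds.differentiableWithinAt.congr_of_eventuallyEq_of_mem ?_ hz
  filter_upwards [nhdsWithin_le_nhds hg, nhdsWithin_le_nhds (eventually_nhds_nhdsWithin.2 hgf),
    self_mem_nhdsWithin] with x hgx hgfx hx
  exact hlim (hDS hx) ((hgx.continuousAt.tendsto.mono_left nhdsWithin_le_nhds).congr' hgfx)

theorem subset_closure_diff_of_finite {U T : Set ℂ} (hU : IsOpen U) (hT : T.Finite) :
    U ⊆ closure (U \ T) :=
  (hT.countable.dense_compl ℂ).open_subset_closure_inter hU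

variable [CompleteSpace F]

theorem exists_differentiableOn_eqOn_diff_of_finite {φ : ℂ → F} {U T : Set ℂ} (hU : IsOpen U)
    (hT : T.Finite) (hφ : DifferentiableOn ℂ φ (U \ T))
    (hb : ∀ z ∈ U, IsBoundedUnder (· ≤ ·) (𝓝[U \ T] z) (‖φ ·‖)) :
    ∃ g : ℂ → F, DifferentiableOn ℂ g U ∧ EqOn g φ (U \ T) := by
  have hUT : IsOpen (U \ T) := hU.sdiff hT.isClosed
  refine exists_differentiableOn_eqOn_of_locally hφ.continuousOn
    (subset_closure_diff_of_finite hU hT) fun z hz => ?_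
  by_cases hzT : z ∈ T
  · have hpunct : U \ T ∈ 𝓝[≠] z := by
      have : U \ (T \ {z}) ∈ 𝓝 z :=
        (hU.sdiff (hT.subset sdiff_subset).isClosed).mem_nhds ⟨hz, by simp⟩
      filter_upwards [nhdsWithin_le_nhds this, self_mem_nhdsWithin] with x hx hxz
      exact ⟨hx.1, fun hxT => hx.2 ⟨hxT, hxz⟩⟩
    have hbdd : IsBoundedUnder (· ≤ ·) (𝓝[≠] z) (norm ∘ fun x => φ x - φ z) := by
      obtain ⟨M, hM⟩ := hb z hz
      refine ⟨M + ‖φ z‖, eventually_map.2 ?_⟩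
      filter_upwards [nhdsWithin_le_iff.2 hpunct (eventually_map.1 hM)] with x hx
      exact norm_sub_le_of_le hx le_rfl
    have hupdate := Complex.differentiableOn_update_limUnder_insert_of_isLittleO hpunct hφ
      hbdd.isLittleO_sub_self_inv
    refine ⟨_, hupdate.eventually_differentiableAt (insert_mem_nhds_iff.2 hpunct), ?_⟩
    filter_upwards [self_mem_nhdsWithin] with x hx
    exact Function.update_of_ne (ne_of_mem_of_not_mem hzT hx.2).symm _ _
  · exact ⟨φ, hφ.eventually_differentiableAt (hUT.mem_nhds ⟨hz, hzT⟩), .of_forall fun _ => rfl⟩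

theorem circleAverage_eq_of_finite_singularities {φ : ℂ → F} {U T : Set ℂ} {c : ℂ} {R : ℝ}
    (hU : IsOpen U) (hcU : closedBall c |R| ⊆ U) (hT : T.Finite) (hcT : c ∉ T)
    (hRT : Disjoint (sphere c |R|) T) (hφ : DifferentiableOn ℂ φ (U \ T))
    (hb : ∀ z ∈ U, IsBoundedUnder (· ≤ ·) (𝓝[U \ T] z) (‖φ ·‖)) :
    Real.circleAverage φ c R = φ c := by
  obtain ⟨g, hg, hgφ⟩ := exists_differentiableOn_eqOn_diff_of_finite hU hT hφ hb
  have hgat {z : ℂ} (hz : z ∈ closedBall c |R|) : DifferentiableAt ℂ g z :=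
    hg.differentiableAt (hU.mem_nhds (hcU hz))
  calc Real.circleAverage φ c R
    _ = Real.circleAverage g c R := Real.circleAverage_congr_sphere fun z hz =>
        (hgφ ⟨hcU (sphere_subset_closedBall hz), hRT.notMem_of_mem_left hz⟩).symm
    _ = g c := circleAverage_of_differentiable_on_off_countable countable_empty
        (fun z hz => (hgat hz).continuousAt.continuousWithinAt)
        fun z hz => hgat (ball_subset_closedBall hz.1)
    _ = φ c := hgφ ⟨hcU (mem_closedBall_self (abs_nonneg R)), hcT⟩

theorem circleAverage_comp_add_smul_eq_self {f : E → F} {S D : Set E} {x v : E} {R : ℝ}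
    (hD : IsOpen D) (hf : DifferentiableOn ℂ f S)
    (hb : ∀ y ∈ D, IsBoundedUnder (· ≤ ·) (𝓝[S] y) (‖f ·‖))
    (hfin : {a : ℂ | x + a • v ∈ D \ S}.Finite) (hx : x ∈ S)
    (hxD : ∀ a ∈ closedBall (0 : ℂ) |R|, x + a • v ∈ D)
    (hxS : ∀ a ∈ sphere (0 : ℂ) |R|, x + a • v ∈ S) :
    Real.circleAverage (fun a => f (x + a • v)) 0 R = f x := by
  have hline : Continuous fun a : ℂ => x + a • v := by fun_prop
  let U : Set ℂ := {a | x + a • v ∈ D}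
  let T : Set ℂ := {a | x + a • v ∈ D \ S}
  have hUT : MapsTo (fun a : ℂ => x + a • v) (U \ T) S := fun a ha =>
    not_not.1 fun haS => ha.2 ⟨ha.1, haS⟩
  have hbline (a : ℂ) (ha : a ∈ U) :
      IsBoundedUnder (· ≤ ·) (𝓝[U \ T] a) fun a => ‖f (x + a • v)‖ :=
    (hb _ ha).imp fun M hM => eventually_map.2 <|
      (hline.continuousWithinAt.tendsto_nhdsWithin hUT).eventually (eventually_map.1 hM)
  have hmean := circleAverage_eq_of_finite_singularities (φ := fun a => f (x + a • v))
    (hD.preimage hline) hxD hfin (fun h0 => h0.2 (by simpa using hx))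
    (disjoint_left.2 fun a ha haT => haT.2 (hxS a ha)) (hf.comp (by fun_prop) hUT) hbline
  simpa using hmean

theorem exists_radius_closedBall_mem_sphere_mem {S D : Set E} {z v : E} (hD : IsOpen D)
    (hz : z ∈ D) (hfin : {a : ℂ | z + a • v ∈ D \ S}.Finite) :
    ∃ R > 0, (∀ a ∈ closedBall (0 : ℂ) R, z + a • v ∈ D) ∧
      ∀ a ∈ sphere (0 : ℂ) R, z + a • v ∈ S := by
  have hline : Continuous fun a : ℂ => z + a • v := by fun_prop
  obtain ⟨r, hr, hrD⟩ := nhds_basis_closedBall.mem_iff.1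
    ((hD.preimage hline).mem_nhds (x := 0) (by simpa))
  obtain ⟨R, ⟨hR0, hRr⟩, hR⟩ := ((Ioo_infinite hr).sdiff (hfin.image norm)).nonempty
  have hRD {a : ℂ} (ha : a ∈ closedBall 0 R) : z + a • v ∈ D :=
    hrD (closedBall_subset_closedBall hRr.le ha)
  refine ⟨R, hR0, fun a => hRD, fun a ha => not_not.1 fun haS => hR ⟨a, ⟨?_, haS⟩, ?_⟩⟩
  · exact hRD (sphere_subset_closedBall ha)
  · exact mem_sphere_zero_iff_norm.1 ha

theorem exists_eventually_circleAverage_extension {f : E → F} {S D : Set E} {z v : E}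
    (hS : IsOpen S) (hD : IsOpen D) (hf : DifferentiableOn ℂ f S)
    (hb : ∀ x ∈ D, IsBoundedUnder (· ≤ ·) (𝓝[S] x) (‖f ·‖))
    (hfin : ∀ x, {a : ℂ | x + a • v ∈ D \ S}.Finite) (hz : z ∈ D) :
    ∃ R : ℝ, ∀ᶠ x in 𝓝 z,
      DifferentiableAt ℂ (fun y => Real.circleAverage (fun a => f (y + a • v)) 0 R) x ∧
      (x ∈ S → Real.circleAverage (fun a => f (x + a • v)) 0 R = f x) := by
  obtain ⟨R, hR, hRD, hRS⟩ := exists_radius_closedBall_mem_sphere_mem hD hz (hfin z)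
  rw [← abs_of_pos hR] at hRD hRS
  have hγ : Continuous (Function.uncurry fun (x : E) (a : ℂ) => x + a • v) := by
    simp only [Function.uncurry_def]
    fun_prop
  refine ⟨R, ?_⟩
  filter_upwards [eventually_forall_mem_of_isCompact (isCompact_closedBall 0 |R|) hD hγ hRD,
    eventually_forall_mem_of_isCompact (isCompact_sphere 0 |R|) hS hγ hRS] with x hxD hxS
  exact ⟨differentiableAt_circleAverage_comp_add_smul hS hf hxS,
    fun hx => circleAverage_comp_add_smul_eq_self hD hf hb (hfin x) hx hxD hxS⟩

-- Near `z` the extension is `x ↦` the average of `f` over `x + ∂B(0, R) • v`, with `R` such that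
-- `z + ∂B(0, R) • v` lies in `S`; it is holomorphic by differentiation under the integral sign.
theorem exists_differentiableOn_eqOn_of_isBoundedUnder {f : E → F} {S D : Set E}
    (hS : IsOpen S) (hD : IsOpen D) (hf : DifferentiableOn ℂ f S)
    (hb : ∀ x ∈ D, IsBoundedUnder (· ≤ ·) (𝓝[S] x) (‖f ·‖)) {v : E}
    (hfin : ∀ x, {a : ℂ | x + a • v ∈ D \ S}.Finite) :
    ∃ g : E → F, DifferentiableOn ℂ g D ∧ EqOn g f S := by
  have hline (x : E) : Continuous fun a : ℂ => x + a • v := by fun_prop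
  refine exists_differentiableOn_eqOn_of_locally hf.continuousOn (fun z hz => ?_) fun z hz => ?_
  · have hcl := subset_closure_diff_of_finite (hD.preimage (hline z)) (hfin z)
    have h0 : (0 : ℂ) ∈ (fun a : ℂ => z + a • v) ⁻¹' D := by simpa
    simpa using map_mem_closure (hline z) (hcl h0) fun a ha =>
      not_not.1 fun haS => ha.2 ⟨ha.1, haS⟩
  · obtain ⟨R, hR⟩ := exists_eventually_circleAverage_extension hS hD hf hb hfin hz
    exact ⟨_, hR.mono fun x hx => hx.1, eventually_nhdsWithin_iff.2 (hR.mono fun x hx => hx.2)⟩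

end RiemannExtension

section PuncturedPolydisc

theorem volume_pi_ball_complex {ι : Type*} [Fintype ι] (c : ι → ℂ) {r : ι → ℝ}
    (hr : ∀ i, 0 ≤ r i) :
    volume (univ.pi fun i => ball (c i) (r i)) = ENNReal.ofReal (∏ i, (r i ^ 2 * π)) := by
  rw [volume_pi_pi, ENNReal.ofReal_prod_of_nonneg fun i _ => by positivity]
  refine Finset.prod_congr rfl fun i _ => ?_
  rw [Complex.volume_ball, ENNReal.ofReal_mul (by positivity), ENNReal.ofReal_pow (hr i),
    ← NNReal.coe_real_pi, ENNReal.ofReal_coe_nnreal]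

theorem pow_mul_le_rpow_of_sq_mul_rpow_le {q x B I p : ℝ} {k : ℕ} (hq0 : 0 < q) (hq1 : q ≤ 1)
    (hx : 0 ≤ x) (hB : 0 < B) (hp : 0 < p) (hk : 2 ≤ k * p) (hI : q ^ 2 * B * x ^ p ≤ I) :
    q ^ k * x ≤ (I / B) ^ p⁻¹ := by
  have hI0 : 0 ≤ I := le_trans (by positivity) hI
  have hqk : (q ^ k) ^ p ≤ q ^ 2 := by
    rw [← Real.rpow_natCast, ← Real.rpow_mul hq0.le, ← Real.rpow_natCast q 2]
    exact Real.rpow_le_rpow_of_exponent_ge hq0 hq1 (by exact_mod_cast hk)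
  rw [Real.le_rpow_inv_iff_of_pos (by positivity) (by positivity) hp,
    Real.mul_rpow (by positivity) hx, le_div_iff₀ hB]
  calc (q ^ k) ^ p * x ^ p * B
    _ ≤ q ^ 2 * x ^ p * B := by gcongr
    _ = q ^ 2 * B * x ^ p := by ring
    _ ≤ I := hI

variable {ι : Type*} {s : Finset ι} {z : ι → ℂ}

/-- The product of the punctured unit disk in the coordinates belonging to `s` and of the unit disk
in the remaining ones. -/
def puncturedPolydisc (s : Finset ι) : Set (ι → ℂ) := {z | ∀ i, ‖z i‖ < 1 ∧ (i ∈ s → z i ≠ 0)}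

theorem isOpen_puncturedPolydisc [Finite ι] (s : Finset ι) : IsOpen (puncturedPolydisc s) := by
  simp only [puncturedPolydisc, ofPred_forall, ofPred_and]
  exact isOpen_iInter_of_finite fun i => (isOpen_lt (by fun_prop) (by fun_prop)).inter <|
    isOpen_iInter_of_finite fun _ => isOpen_ne_fun (by fun_prop) (by fun_prop)

theorem isOpen_setOf_forall_norm_lt_one [Finite ι] : IsOpen {z : ι → ℂ | ∀ i, ‖z i‖ < 1} := by
  simpa [puncturedPolydisc] using isOpen_puncturedPolydisc (∅ : Finset ι)

theorem finite_setOf_add_smul_one_mem_diff_puncturedPolydisc [Finite ι] (s : Finset ι)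
    (z : ι → ℂ) :
    {a : ℂ | z + a • (1 : ι → ℂ) ∈ {w | ∀ i, ‖w i‖ < 1} \ puncturedPolydisc s}.Finite := by
  refine (finite_range fun i => -z i).subset fun a ⟨haD, haS⟩ => ?_
  by_contra ha
  refine haS fun i => ⟨haD i, fun _ h0 => ha ⟨i, ?_⟩⟩
  exact (eq_neg_of_add_eq_zero_right (by simpa using h0)).symm

open Classical in
/-- A polyradius about `z` small enough for the polydisc it defines to stay inside
`puncturedPolydisc s`. -/
noncomputable def puncturedPolyradius (s : Finset ι) (z : ι → ℂ) (i : ι) : ℝ :=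
  (1 - ‖z i‖) * if i ∈ s then ‖z i‖ else 1

theorem puncturedPolyradius_nonneg (hz : z ∈ puncturedPolydisc s) (i : ι) :
    0 ≤ puncturedPolyradius s z i := by
  have := sub_nonneg.2 (hz i).1.le
  unfold puncturedPolyradius
  positivity

theorem add_mem_puncturedPolydisc (hz : z ∈ puncturedPolydisc s) {w : ι → ℂ}
    (hw : ∀ i, ‖w i‖ < puncturedPolyradius s z i) : z + w ∈ puncturedPolydisc s := by
  classical
  intro i
  have hzi : 0 ≤ 1 - ‖z i‖ := sub_nonneg.2 (hz i).1.le
  have hwi := hw i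
  unfold puncturedPolyradius at hwi
  refine ⟨(norm_add_le (z i) (w i)).trans_lt ?_, fun hi h0 => hwi.not_ge ?_⟩
  · have hle : (if i ∈ s then ‖z i‖ else 1) ≤ 1 := by split_ifs <;> simp [(hz i).1.le]
    linarith [mul_le_of_le_one_right hzi hle]
  · rw [if_pos hi, ← norm_neg (w i), ← eq_neg_of_add_eq_zero_left h0]
    exact mul_le_of_le_one_left (norm_nonneg _) (sub_le_self 1 (norm_nonneg _))

variable [Fintype ι]

theorem prod_puncturedPolyradius_sq_mul_pi (s : Finset ι) (z : ι → ℂ) :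
    ∏ i, (puncturedPolyradius s z i ^ 2 * π) =
      (∏ i ∈ s, ‖z i‖) ^ 2 * ∏ i, ((1 - ‖z i‖) ^ 2 * π) := by
  classical
  have hs : ∏ i ∈ s, ‖z i‖ = ∏ i, if i ∈ s then ‖z i‖ else 1 := by simp
  rw [hs, ← Finset.prod_pow, ← Finset.prod_mul_distrib]
  refine Finset.prod_congr rfl fun i _ => ?_
  rw [puncturedPolyradius]
  ring

variable {F : Type*} [NormedAddCommGroup F] [NormedSpace ℂ F] [CompleteSpace F] {f : (ι → ℂ) → F}
  {p : ℝ}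

theorem sq_prod_norm_mul_norm_rpow_le_toReal_setLIntegral (hp : 0 < p)
    (hf : DifferentiableOn ℂ f (puncturedPolydisc s))
    (hint : ∫⁻ w in puncturedPolydisc s, ENNReal.ofReal (‖f w‖ ^ p) ≠ ⊤)
    (hz : z ∈ puncturedPolydisc s) :
    (∏ i ∈ s, ‖z i‖) ^ 2 * (∏ i, ((1 - ‖z i‖) ^ 2 * π)) * ‖f z‖ ^ p ≤
      (∫⁻ w in puncturedPolydisc s, ENNReal.ofReal (‖f w‖ ^ p)).toReal := by
  let P : Set (ι → ℂ) := univ.pi fun i => ball 0 (puncturedPolyradius s z i)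
  have hP : Balanced ℂ P := balanced_iff_smul_mem.2 fun a ha w hw i hi =>
    balanced_ball_zero.smul_mem ha (hw i hi)
  have hmean := measure_mul_ofReal_norm_rpow_le_setLIntegral (μ := volume) (P := P) hp
    (isOpen_puncturedPolydisc s) hf (.univ_pi fun i => measurableSet_ball) hP
    fun w hw => add_mem_puncturedPolydisc hz fun i => by simpa using hw i trivial
  rwa [volume_pi_ball_complex _ (puncturedPolyradius_nonneg hz), ← ENNReal.ofReal_mul
    (by positivity), ENNReal.ofReal_le_iff_le_toReal hint, prod_puncturedPolyradius_sq_mul_pi]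
    at hmean

theorem norm_prod_pow_smul_le_rpow (hp : 0 < p) (hf : DifferentiableOn ℂ f (puncturedPolydisc s))
    (hint : ∫⁻ w in puncturedPolydisc s, ENNReal.ofReal (‖f w‖ ^ p) ≠ ⊤) {k : ℕ} (hk : 2 ≤ k * p)
    (hz : z ∈ puncturedPolydisc s) :
    ‖(∏ i ∈ s, z i) ^ k • f z‖ ≤
      ((∫⁻ w in puncturedPolydisc s, ENNReal.ofReal (‖f w‖ ^ p)).toReal /
        ∏ i, ((1 - ‖z i‖) ^ 2 * π)) ^ p⁻¹ := by
  rw [norm_smul, norm_pow, norm_prod]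
  refine pow_mul_le_rpow_of_sq_mul_rpow_le
    (Finset.prod_pos fun i hi => norm_pos_iff.2 ((hz i).2 hi))
    (Finset.prod_le_one (fun i _ => norm_nonneg _) fun i _ => (hz i).1.le) (norm_nonneg _)
    (Finset.prod_pos fun i _ => ?_) hp hk
    (sq_prod_norm_mul_norm_rpow_le_toReal_setLIntegral hp hf hint hz)
  have := sub_pos.2 (hz i).1
  positivity

theorem isBoundedUnder_norm_prod_pow_smul (hp : 0 < p)
    (hf : DifferentiableOn ℂ f (puncturedPolydisc s))
    (hint : ∫⁻ w in puncturedPolydisc s, ENNReal.ofReal (‖f w‖ ^ p) ≠ ⊤) {k : ℕ} (hk : 2 ≤ k * p)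
    (hz : ∀ i, ‖z i‖ < 1) :
    IsBoundedUnder (· ≤ ·) (𝓝[puncturedPolydisc s] z) fun w => ‖(∏ i ∈ s, w i) ^ k • f w‖ := by
  have hne : ∏ i, ((1 - ‖z i‖) ^ 2 * π) ≠ 0 := Finset.prod_ne_zero_iff.2 fun i _ =>
    mul_ne_zero (pow_ne_zero 2 (sub_pos.2 (hz i)).ne') Real.pi_ne_zero
  have hcont (I : ℝ) :
      ContinuousAt (fun w : ι → ℂ => (I / ∏ i, ((1 - ‖w i‖) ^ 2 * π)) ^ p⁻¹) z := by
    have hprod : Continuous fun w : ι → ℂ => ∏ i, ((1 - ‖w i‖) ^ 2 * π) := by fun_prop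
    exact (continuousAt_const.div hprod.continuousAt hne).rpow_const (.inr (inv_nonneg.2 hp.le))
  exact ((hcont _).tendsto.mono_left nhdsWithin_le_nhds).isBoundedUnder_le.mono_le <|
    eventually_mem_nhdsWithin.mono fun w hw => norm_prod_pow_smul_le_rpow hp hf hint hk hw

end PuncturedPolydisc

theorem stmt_0_general {ι F : Type*} [Fintype ι] [NormedAddCommGroup F] [NormedSpace ℂ F]
    [CompleteSpace F] (s : Finset ι) {p : ℝ} (hp : 0 < p) {f : (ι → ℂ) → F}
    (hf : DifferentiableOn ℂ f (puncturedPolydisc s))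
    (hint : ∫⁻ z in puncturedPolydisc s, ENNReal.ofReal (‖f z‖ ^ p) ≠ ⊤) :
    ∃ g : (ι → ℂ) → F, DifferentiableOn ℂ g {z | ∀ i, ‖z i‖ < 1} ∧
      ∀ z ∈ puncturedPolydisc s, g z = (∏ i ∈ s, z i) ^ ⌈2 / p⌉₊ • f z := by
  have hk : 2 ≤ ⌈2 / p⌉₊ * p := (div_le_iff₀ hp).1 (Nat.le_ceil _)
  have hprod : Differentiable ℂ fun z : ι → ℂ => (∏ i ∈ s, z i) ^ ⌈2 / p⌉₊ := by fun_prop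
  exact exists_differentiableOn_eqOn_of_isBoundedUnder (v := 1) (isOpen_puncturedPolydisc s)
    isOpen_setOf_forall_norm_lt_one (hprod.differentiableOn.smul hf)
    (fun z hz => isBoundedUnder_norm_prod_pow_smul hp hf hint hk hz)
    (finite_setOf_add_smul_one_mem_diff_puncturedPolydisc s)

/-- A holomorphic function on a product of punctured disks and disks with `∫ |f|^p ≤ C`
extends meromorphically: `(z₁⋯z_ℓ)^⌈2/p⌉ · f` extends holomorphically to the polydisk. -/
theorem stmt_0 (n l : ℕ) (hl : l ≤ n) (p C : ℝ) (hp : 0 < p) (hC : 0 < C)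
    (f : (Fin n → ℂ) → ℂ)
    (S : Set (Fin n → ℂ))
    (hS : S = {z | ∀ i : Fin n, ‖z i‖ < 1 ∧ ((i : ℕ) < l → z i ≠ 0)})
    (hf : DifferentiableOn ℂ f S)
    (hint : ∫⁻ z in S, ENNReal.ofReal (‖f z‖ ^ p) ≤ ENNReal.ofReal C) :
    ∃ g : (Fin n → ℂ) → ℂ,
      DifferentiableOn ℂ g {z | ∀ i : Fin n, ‖z i‖ < 1} ∧
      ∀ z ∈ S,
        g z = (∏ i ∈ Finset.univ.filter (fun i : Fin n => (i : ℕ) < l), z i) ^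
            (⌈(2 : ℝ) / p⌉₊) * f z := by
  obtain rfl : S = puncturedPolydisc (Finset.univ.filter fun i : Fin n => (i : ℕ) < l) := by
    simpa [puncturedPolydisc] using hS
  exact stmt_0_general _ hp hf (ne_top_of_le_ne_top ENNReal.ofReal_ne_top hint)
end

section
/- Let δ : Δ* → [0,∞) be a continuous subharmonic function on the punctured unit disk such that for every ε > 0, lim_{|z|→0} (δ(z) + ε log|z|) = −∞. Then δ extends to a subharmonic function on the full disk Δ, and consequently satisfies the maximum principle: sup_{Δ_{1/2}} δ ≤ sup_{|z|=1/2} δ. -/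
open Metric MeasureTheory

/-- `f` is subharmonic on `s`: upper semicontinuous and satisfying the sub-mean-value
inequality on every closed disk contained in `s`. -/
def SubhOn (f : ℂ → ℝ) (s : Set ℂ) : Prop :=
  UpperSemicontinuousOn f s ∧ ∀ z : ℂ, ∀ ρ : ℝ, 0 < ρ → closedBall z ρ ⊆ s →
    f z ≤ (2 * Real.pi)⁻¹ *
      ∫ θ in (0:ℝ)..(2 * Real.pi), f (z + ρ * Complex.exp (θ * Complex.I))

/-!
Near the puncture `p` the function `f + ε log |z - p|` tends to `-∞`, so the maximum principle
applies to it off a small disk around `p`. Letting `ε → 0`, a function harmonic on a disk which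
dominates `f` on the boundary dominates `f` inside, as if there were no puncture.

The extension takes the value `limsup f` at `p`. For a circle around `p`, uniform approximation of
the boundary values by trigonometric polynomials, that is by harmonic functions on `ℂ`, turns this
domination into the sub-mean value inequality. A circle through `p` is the limit of smaller
concentric circles, and dominated convergence applies because `f` is bounded near `p`.
-/

open Filter InnerProductSpace Real Set Topology

/-! ### Circle averages -/

lemma eventually_closedBall_abs_subset {X : Type*} [PseudoMetricSpace X] {x : X} {s : Set X}
    (hs : s ∈ 𝓝 x) : ∀ᶠ r in 𝓝[>] (0 : ℝ), closedBall x |r| ⊆ s := by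
  filter_upwards [nhdsWithin_le_nhds (eventually_closedBall_subset hs), self_mem_nhdsWithin]
    with r hsub hr
  rwa [abs_of_pos hr]

lemma eventually_circleIntegrable_of_eventually_continuousAt {E : Type*} [NormedAddCommGroup E]
    {f : ℂ → E} {z : ℂ} (hf : ∀ᶠ w in 𝓝 z, ContinuousAt f w) :
    ∀ᶠ r in 𝓝[>] (0 : ℝ), CircleIntegrable f z r := by
  filter_upwards [eventually_closedBall_abs_subset hf] with r hr
  exact ContinuousOn.circleIntegrable' fun w hw ↦
    (hr (sphere_subset_closedBall hw)).continuousWithinAt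

lemma circleAverage_lt_of_le_of_exists_lt {f : ℂ → ℝ} {c : ℂ} {R m : ℝ}
    (hf : ContinuousOn f (sphere c |R|)) (hle : ∀ z ∈ sphere c |R|, f z ≤ m)
    (hlt : ∃ z ∈ sphere c |R|, f z < m) : circleAverage f c R < m := by
  have hmem (θ : ℝ) : circleMap c R θ ∈ sphere c |R| := circleMap_mem_sphere' c R θ
  obtain ⟨z, hz, hzm⟩ := hlt
  rw [← image_circleMap_Ioc] at hz
  obtain ⟨θ, hθ, rfl⟩ := hz
  have hint : ∫ t in (0 : ℝ)..(2 * π), f (circleMap c R t) < ∫ _ in (0 : ℝ)..(2 * π), m :=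
    intervalIntegral.integral_lt_integral_of_continuousOn_of_le_of_exists_lt two_pi_pos
      (hf.comp_continuous (continuous_circleMap c R) hmem).continuousOn continuousOn_const
      (fun t _ ↦ hle _ (hmem t)) ⟨θ, Ioc_subset_Icc_self hθ, hzm⟩
  rw [intervalIntegral.integral_const, smul_eq_mul, sub_zero] at hint
  rwa [circleAverage_def, smul_eq_mul, inv_mul_lt_iff₀ two_pi_pos]

lemma tendsto_circleAverage_nhdsLT {E : Type*} [NormedAddCommGroup E] [NormedSpace ℝ E]
    {f : ℂ → E} {c : ℂ} {R M : ℝ} {S : Set ℂ} (hR : 0 < R) (hS : S.Countable)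
    (hSR : S ⊆ sphere c R) (hf : ContinuousOn f (closedBall c R \ S))
    (hM : ∀ z ∈ ball c R, ‖f z‖ ≤ M) :
    Tendsto (circleAverage f c) (𝓝[<] R) (𝓝 (circleAverage f c R)) := by
  have hrad : ∀ᶠ r in 𝓝[<] R, 0 < r ∧ r < R := Ioo_mem_nhdsLT hR
  have hball {r : ℝ} (hr : 0 < r ∧ r < R) (θ : ℝ) : circleMap c r θ ∈ ball c R :=
    closedBall_subset_ball hr.2 (circleMap_mem_closedBall c hr.1.le θ)
  have hdiff : ball c R ⊆ closedBall c R \ S := fun z hz ↦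
    ⟨ball_subset_closedBall hz, fun hzS ↦ (mem_ball.1 hz).ne (hSR hzS)⟩
  have hae : ∀ᵐ θ : ℝ, circleMap c R θ ∉ S :=
    measure_eq_zero_iff_ae_notMem.1 ((hS.preimage_circleMap c hR.ne').measure_zero volume)
  refine Tendsto.const_smul (intervalIntegral.tendsto_integral_filter_of_dominated_convergence
    (fun _ ↦ M) ?_ ?_ intervalIntegrable_const ?_) _
  · filter_upwards [hrad] with r hr
    exact (hf.comp_continuous (continuous_circleMap c r)
      fun θ ↦ hdiff (hball hr θ)).aestronglyMeasurable
  · filter_upwards [hrad] with r hr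
    exact .of_forall fun θ _ ↦ hM _ (hball hr θ)
  · filter_upwards [hae] with θ hθ _
    have hradial : Tendsto (fun r ↦ circleMap c r θ) (𝓝[<] R) (𝓝 (circleMap c R θ)) :=
      ((by unfold circleMap; fun_prop : Continuous fun r : ℝ ↦ circleMap c r θ).tendsto R).mono_left
        nhdsWithin_le_nhds
    refine (hf _ ⟨circleMap_mem_closedBall c hR.le θ, hθ⟩).tendsto.comp
      (tendsto_nhdsWithin_iff.2 ⟨hradial, ?_⟩)
    filter_upwards [hrad] with r hr using hdiff (hball hr θ)

/-! ### Approximation by harmonic functions on a circle -/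

lemma exists_add_conj_eq_of_mem_span_fourier {T : ℝ} {f : C(AddCircle T, ℂ)}
    (hf : f ∈ Submodule.span ℂ (range (@fourier T))) :
    ∃ P Q : ℂ → ℂ, Differentiable ℂ P ∧ Differentiable ℂ Q ∧
      ∀ x, f x = P (AddCircle.toCircle x) + (starRingEnd ℂ) (Q (AddCircle.toCircle x)) := by
  induction hf using Submodule.span_induction with
  | mem f h =>
    obtain ⟨n, rfl⟩ := h
    rcases le_total 0 n with hn | hn
    · lift n to ℕ using hn
      refine ⟨fun z ↦ z ^ n, fun _ ↦ 0, by fun_prop, by fun_prop, fun x ↦ ?_⟩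
      simp [fourier_apply, AddCircle.toCircle_nsmul]
    · obtain ⟨m, rfl⟩ := Int.exists_eq_neg_ofNat hn
      refine ⟨fun _ ↦ 0, fun z ↦ z ^ m, by fun_prop, by fun_prop, fun x ↦ ?_⟩
      rw [fourier_neg]
      simp [fourier_apply, AddCircle.toCircle_nsmul]
  | zero => exact ⟨fun _ ↦ 0, fun _ ↦ 0, by fun_prop, by fun_prop, by simp⟩
  | add f g _ _ hf hg =>
    obtain ⟨P, Q, hP, hQ, h⟩ := hf
    obtain ⟨P', Q', hP', hQ', h'⟩ := hg
    refine ⟨fun z ↦ P z + P' z, fun z ↦ Q z + Q' z, by fun_prop, by fun_prop, fun x ↦ ?_⟩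
    simp only [ContinuousMap.add_apply, h, h', map_add]
    ring
  | smul a f _ hf =>
    obtain ⟨P, Q, hP, hQ, h⟩ := hf
    refine ⟨fun z ↦ a * P z, fun z ↦ (starRingEnd ℂ a) * Q z, by fun_prop, by fun_prop,
      fun x ↦ ?_⟩
    simp only [ContinuousMap.smul_apply, h, map_mul, smul_eq_mul, Complex.conj_conj]
    ring

lemma exists_differentiable_re_approx_on_circle (f : C(Circle, ℝ)) {η : ℝ} (hη : 0 < η) :
    ∃ H : ℂ → ℂ, Differentiable ℂ H ∧ ∀ z : Circle, |f z - (H z).re| < η := by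
  let F : C(AddCircle (1 : ℝ), ℂ) :=
    ⟨fun x ↦ (f (AddCircle.toCircle x) : ℂ), by
      have := AddCircle.continuous_toCircle (T := 1)
      fun_prop⟩
  have hF : F ∈ (Submodule.span ℂ (range (@fourier 1))).topologicalClosure := by
    rw [span_fourier_closure_eq_top]
    trivial
  obtain ⟨G, hG, hFG⟩ := Metric.mem_closure_iff.1 hF η hη
  obtain ⟨P, Q, hP, hQ, hGPQ⟩ := exists_add_conj_eq_of_mem_span_fourier hG
  refine ⟨P + Q, hP.add hQ, fun z ↦ ?_⟩
  obtain ⟨x, rfl⟩ : ∃ x : AddCircle (1 : ℝ), AddCircle.toCircle x = z :=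
    ⟨_, AddCircle.homeomorphCircle_apply one_ne_zero _ ▸
      (AddCircle.homeomorphCircle one_ne_zero).apply_symm_apply z⟩
  have hx := (ContinuousMap.dist_lt_iff hη).1 hFG x
  rw [hGPQ, Complex.dist_eq] at hx
  refine lt_of_eq_of_lt ?_ ((Complex.abs_re_le_norm _).trans_lt hx)
  simp [F]

lemma exists_harmonicOnNhd_univ_approx_on_sphere {f : ℂ → ℝ} {c : ℂ} {R η : ℝ} (hR : 0 < R)
    (hf : ContinuousOn f (sphere c R)) (hη : 0 < η) :
    ∃ h : ℂ → ℝ, HarmonicOnNhd h univ ∧ ∀ z ∈ sphere c R, |f z - h z| < η := by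
  have hR_ne : (R : ℂ) ≠ 0 := by exact_mod_cast hR.ne'
  have hmem (z : Circle) : c + R * z ∈ sphere c R := by
    rw [mem_sphere_iff_norm, add_sub_cancel_left, norm_mul, Circle.norm_coe, mul_one,
      Complex.norm_of_nonneg hR.le]
  let F : C(Circle, ℝ) := ⟨fun z ↦ f (c + R * z), hf.comp_continuous (by fun_prop) hmem⟩
  obtain ⟨H, hH, happrox⟩ := exists_differentiable_re_approx_on_circle F hη
  have hH_affine : Differentiable ℂ fun z ↦ H ((z - c) / R) := hH.comp (by fun_prop)
  refine ⟨_, fun z _ ↦ (hH_affine.analyticAt z).harmonicAt_re, fun z hz ↦ ?_⟩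
  have hz_norm : ‖(z - c) / R‖ = 1 := by
    rw [norm_div, mem_sphere_iff_norm.1 hz, Complex.norm_of_nonneg hR.le, div_self hR.ne']
  simpa [F, mul_div_cancel₀ _ hR_ne] using
    happrox ⟨(z - c) / R, mem_sphere_zero_iff_norm.2 hz_norm⟩

lemma le_circleAverage_of_forall_harmonic_le {f : ℂ → ℝ} {c : ℂ} {R a : ℝ} (hR : 0 < R)
    (hf : ContinuousOn f (sphere c R))
    (ha : ∀ h : ℂ → ℝ, HarmonicOnNhd h univ → (∀ z ∈ sphere c R, f z ≤ h z) → a ≤ h c) :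
    a ≤ circleAverage f c R := by
  refine le_of_forall_pos_le_add fun η hη ↦ ?_
  obtain ⟨h, hh, happrox⟩ := exists_harmonicOnNhd_univ_approx_on_sphere hR hf (half_pos hη)
  have hmajorant : a ≤ h c + η / 2 :=
    ha (fun z ↦ h z + η / 2) (hh.add (harmonicOnNhd_const _)) fun z hz ↦ by
      linarith [abs_lt.1 (happrox z hz)]
  have hmean : circleAverage h c R = h c := (hh.mono (subset_univ _)).circleAverage_eq
  have hh_int : CircleIntegrable h c R :=
    (hh.mono (subset_univ _)).continuousOn.circleIntegrable hR.le
  have hf_int : CircleIntegrable f c R := hf.circleIntegrable hR.le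
  have hle : circleAverage h c R ≤ circleAverage (fun z ↦ f z + η / 2) c R :=
    circleAverage_mono hh_int (hf_int.add (circleIntegrable_const _ _ _)) fun z hz ↦ by
      rw [abs_of_pos hR] at hz
      linarith [abs_lt.1 (happrox z hz)]
  rw [circleAverage_fun_add hf_int (circleIntegrable_const _ _ _), circleAverage_const] at hle
  linarith

/-! ### The maximum principle -/

/-- The local sub-mean value property at `z`: the value at `z` is at most the average over every
sufficiently small circle centred at `z`. -/
def SubmeanAt (u : ℂ → ℝ) (z : ℂ) : Prop :=
  ∀ᶠ r in 𝓝[>] 0, u z ≤ circleAverage u z r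

lemma SubmeanAt.add {u v : ℂ → ℝ} {z : ℂ} (hu : SubmeanAt u z) (hv : SubmeanAt v z)
    (hu_cont : ∀ᶠ w in 𝓝 z, ContinuousAt u w) (hv_cont : ∀ᶠ w in 𝓝 z, ContinuousAt v w) :
    SubmeanAt (u + v) z := by
  filter_upwards [hu, hv, eventually_circleIntegrable_of_eventually_continuousAt hu_cont,
    eventually_circleIntegrable_of_eventually_continuousAt hv_cont] with r hur hvr hui hvi
  rw [circleAverage_add hui hvi]
  exact add_le_add hur hvr

lemma submeanAt_of_harmonicAt {u : ℂ → ℝ} {z : ℂ} (hu : HarmonicAt u z) : SubmeanAt u z := by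
  filter_upwards [eventually_closedBall_abs_subset hu.eventually] with r hr
  exact (InnerProductSpace.HarmonicOnNhd.circleAverage_eq hr).ge

lemma SubmeanAt.add_harmonicAt {u v : ℂ → ℝ} {z : ℂ} (hu : SubmeanAt u z)
    (hu_cont : ∀ᶠ w in 𝓝 z, ContinuousAt u w) (hv : HarmonicAt v z) : SubmeanAt (u + v) z :=
  hu.add (submeanAt_of_harmonicAt hv) hu_cont
    (hv.eventually.mono fun _ hw ↦ hw.1.continuousAt)

theorem le_of_submeanAt_of_frontier_le {K : Set ℂ} {u : ℂ → ℝ} {m : ℝ} (hK : IsCompact K)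
    (hu : ContinuousOn u K) (hmean : ∀ z ∈ interior K, SubmeanAt u z)
    (hfr : ∀ z ∈ frontier K, u z ≤ m) : ∀ z ∈ K, u z ≤ m := by
  intro z hz
  by_contra! hlt
  obtain ⟨w, hw, hmax⟩ := hK.exists_isMaxOn ⟨z, hz⟩ hu
  have hmaxset : IsCompact (K ∩ u ⁻¹' {u w}) :=
    hK.of_isClosed_subset (hu.preimage_isClosed_of_isClosed hK.isClosed isClosed_singleton)
      inter_subset_left
  -- At a rightmost maximum point `a`, small circles contain the point `a + r`, where `u < u a`.
  obtain ⟨a, ⟨haK, hau⟩, hright⟩ :=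
    hmaxset.exists_isMaxOn ⟨w, hw, rfl⟩ Complex.continuous_re.continuousOn
  have hau : u a = u w := hau
  have ha : a ∈ interior K := by
    by_contra h
    have := hfr a (hK.isClosed.frontier_eq ▸ ⟨haK, h⟩)
    linarith [isMaxOn_iff.1 hmax z hz]
  obtain ⟨r, ⟨hsubmean, hrK⟩, hr : 0 < r⟩ := ((hmean a ha).and (eventually_closedBall_abs_subset
    (mem_interior_iff_mem_nhds.1 ha))).and self_mem_nhdsWithin |>.exists
  have hsphere : sphere a |r| ⊆ K := sphere_subset_closedBall.trans hrK
  have har : a + r ∈ sphere a |r| := by simp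
  have hstrict : u (a + r) < u w := by
    refine lt_of_le_of_ne (hmax (hsphere har)) fun h ↦ ?_
    have : (a + r).re ≤ a.re := hright ⟨hsphere har, h⟩
    simp only [Complex.add_re, Complex.ofReal_re] at this
    linarith
  have := circleAverage_lt_of_le_of_exists_lt (hu.mono hsphere)
    (fun y hy ↦ hmax (hsphere hy)) ⟨_, har, hstrict⟩
  linarith

theorem le_of_submeanAt_of_frontier_le_of_eventually_le {D : Set ℂ} {p : ℂ} {u : ℂ → ℝ} {m : ℝ}
    (hD : IsCompact D) (hu : ContinuousOn u (D \ {p}))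
    (hmean : ∀ z ∈ interior D, z ≠ p → SubmeanAt u z)
    (hfr : ∀ z ∈ frontier D, z ≠ p → u z ≤ m) (hp : ∀ᶠ z in 𝓝[≠] p, u z ≤ m) :
    ∀ z ∈ D, z ≠ p → u z ≤ m := by
  intro z hz hzp
  rw [eventually_nhdsWithin_iff, nhds_basis_closedBall.eventually_iff] at hp
  obtain ⟨R, hR, hnear⟩ := hp
  by_cases hzR : z ∈ ball p R
  · exact hnear (ball_subset_closedBall hzR) hzp
  have hne {w : ℂ} (hw : w ∉ ball p R) : w ≠ p := fun h ↦ hw (h ▸ mem_ball_self hR)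
  refine le_of_submeanAt_of_frontier_le (K := D ∩ (ball p R)ᶜ) (hD.diff isOpen_ball)
    (hu.mono fun w hw ↦ ⟨hw.1, hne hw.2⟩) (fun w hw ↦ ?_) (fun w hw ↦ ?_) z ⟨hz, hzR⟩
  · exact hmean w (interior_mono sdiff_subset hw) (hne (interior_subset hw).2)
  · have hwp : w ≠ p := hne ((hD.diff isOpen_ball).isClosed.frontier_subset hw).2
    rcases frontier_inter_subset _ _ hw with ⟨hwD, -⟩ | ⟨-, hwR⟩
    · exact hfr w hwD hwp
    · rw [frontier_compl] at hwR
      exact hnear (frontier_ball_subset_sphere.trans sphere_subset_closedBall hwR) hwp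

/-- Sub-logarithmic growth at `p`, from above only: `u` is eventually smaller than every
`ε log (1 / |z - p|)`, even by an arbitrarily large constant. -/
def SubLogGrowthAt (u : ℂ → ℝ) (p : ℂ) : Prop :=
  ∀ ε > 0, Tendsto (fun z ↦ u z + ε * log ‖z - p‖) (𝓝[≠] p) atBot

lemma SubLogGrowthAt.add_continuousAt {u v : ℂ → ℝ} {p : ℂ} (hu : SubLogGrowthAt u p)
    (hv : ContinuousAt v p) : SubLogGrowthAt (u + v) p := fun ε hε ↦ by
  simpa only [Pi.add_apply, add_right_comm] using
    (hu ε hε).atBot_add (hv.tendsto.mono_left nhdsWithin_le_nhds)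

theorem le_of_submeanAt_of_frontier_le_of_subLogGrowthAt {D : Set ℂ} {p : ℂ} {u : ℂ → ℝ} {m : ℝ}
    (hD : IsCompact D) (hu : ContinuousOn u (D \ {p}))
    (hmean : ∀ z ∈ interior D, z ≠ p → SubmeanAt u z)
    (hfr : ∀ z ∈ frontier D, z ≠ p → u z ≤ m) (hp : SubLogGrowthAt u p) :
    ∀ z ∈ D, z ≠ p → u z ≤ m := by
  obtain ⟨R, hR⟩ := hD.isBounded.subset_closedBall p
  have hlog_le {z : ℂ} (hz : z ∈ D) (hzp : z ≠ p) : log ‖z - p‖ ≤ log R :=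
    log_le_log (norm_sub_pos_iff.2 hzp) (mem_closedBall_iff_norm.1 (hR hz))
  have hharm (ε : ℝ) {z : ℂ} (hzp : z ≠ p) :
      HarmonicAt (fun w ↦ ε * (log ‖w - p‖ - log R)) z :=
    ((AnalyticAt.harmonicAt_log_norm (f := (· - p)) (by fun_prop) (sub_ne_zero.2 hzp)).sub
      (harmonicAt_const (log R))).const_smul (c := ε)
  have hperturbed {ε : ℝ} (hε : 0 < ε) :
      ∀ z ∈ D, z ≠ p → u z + ε * (log ‖z - p‖ - log R) ≤ m := by
    refine le_of_submeanAt_of_frontier_le_of_eventually_le hD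
      (hu.add fun z hz ↦ (hharm ε hz.2).1.continuousAt.continuousWithinAt) ?_ ?_ ?_
    · intro z hz hzp
      refine (hmean z hz hzp).add_harmonicAt ?_ (hharm ε hzp)
      filter_upwards [(isOpen_interior.sdiff isClosed_singleton).mem_nhds ⟨hz, hzp⟩] with w hw
      exact hu.continuousAt (mem_of_superset
        ((isOpen_interior.sdiff isClosed_singleton).mem_nhds hw)
        (sdiff_subset_sdiff_left interior_subset))
    · intro z hz hzp
      have := mul_nonpos_of_nonneg_of_nonpos hε.le
        (sub_nonpos.2 (hlog_le (hD.isClosed.frontier_subset hz) hzp))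
      linarith [hfr z hz hzp]
    · filter_upwards [(hp ε hε).eventually_le_atBot (m + ε * log R)] with z hz
      linarith
  intro z hz hzp
  have hlim : Tendsto (fun ε : ℝ ↦ u z + ε * (log ‖z - p‖ - log R)) (𝓝[>] 0) (𝓝 (u z)) :=
    (Continuous.tendsto' (by fun_prop) 0 (u z) (by simp)).mono_left nhdsWithin_le_nhds
  exact le_of_tendsto hlim (eventually_mem_nhdsWithin.mono fun ε hε ↦ hperturbed hε z hz hzp)

/-! ### Subharmonic functions with a puncture -/

lemma SubhOn.le_circleAverage {f : ℂ → ℝ} {s : Set ℂ} {c : ℂ} {R : ℝ} (hf : SubhOn f s)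
    (hR : 0 < R) (hs : closedBall c R ⊆ s) : f c ≤ circleAverage f c R :=
  hf.2 c R hR hs

lemma SubhOn.submeanAt {f : ℂ → ℝ} {s : Set ℂ} {z : ℂ} (hf : SubhOn f s) (hs : s ∈ 𝓝 z) :
    SubmeanAt f z := by
  filter_upwards [eventually_closedBall_abs_subset hs, self_mem_nhdsWithin] with r hrs hr
  rw [abs_of_pos hr] at hrs
  exact hf.le_circleAverage hr hrs

lemma exists_norm_le_of_isBoundedUnder_nhdsNE {X E : Type*} [TopologicalSpace X]
    [SeminormedAddCommGroup E] {f : X → E} {D : Set X} {p : X} (hD : IsCompact D)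
    (hf : ContinuousOn f (D \ {p})) (hbdd : (𝓝[≠] p).IsBoundedUnder (· ≤ ·) (‖f ·‖)) :
    ∃ M, ∀ z ∈ D \ {p}, ‖f z‖ ≤ M := by
  obtain ⟨M₁, hM₁⟩ := hbdd
  obtain ⟨V, hV, hV_open, hpV⟩ :=
    eventually_nhds_iff.1 (eventually_nhdsWithin_iff.1 (eventually_map.1 hM₁))
  obtain ⟨M₂, hM₂⟩ := (hD.diff hV_open).exists_bound_of_continuousOn
    (hf.mono (sdiff_subset_sdiff_right (singleton_subset_iff.2 hpV)))
  refine ⟨max M₁ M₂, fun z hz ↦ ?_⟩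
  by_cases hzV : z ∈ V
  · exact (hV z hzV hz.2).trans (le_max_left ..)
  · exact (hM₂ z ⟨hz.1, hzV⟩).trans (le_max_right ..)

section Puncture

variable {f : ℂ → ℝ} {U D : Set ℂ} {p c : ℂ} {R : ℝ}

theorem SubhOn.le_harmonic_of_frontier_le {h : ℂ → ℝ} (hsub : SubhOn f (U \ {p}))
    (hcont : ContinuousOn f (U \ {p})) (hgrowth : SubLogGrowthAt f p) (hD : IsCompact D)
    (hDU : D ⊆ U) (hh : HarmonicOnNhd h D) (hhp : ContinuousAt h p)
    (hfr : ∀ z ∈ frontier D, z ≠ p → f z ≤ h z) : ∀ z ∈ D, z ≠ p → f z ≤ h z := by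
  have hDp : D \ {p} ⊆ U \ {p} := sdiff_subset_sdiff_left hDU
  have hnhds {z : ℂ} (hz : z ∈ interior D) (hzp : z ≠ p) : U \ {p} ∈ 𝓝 z :=
    mem_of_superset ((isOpen_interior.sdiff isClosed_singleton).mem_nhds ⟨hz, hzp⟩)
      ((sdiff_subset_sdiff_left interior_subset).trans hDp)
  have hdiff : ∀ z ∈ D, z ≠ p → (f + -h) z ≤ 0 := by
    refine le_of_submeanAt_of_frontier_le_of_subLogGrowthAt hD
      ((hcont.mono hDp).add (hh.continuousOn.mono sdiff_subset).neg) (fun z hz hzp ↦ ?_)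
      (fun z hz hzp ↦ by simpa using hfr z hz hzp) (hgrowth.add_continuousAt hhp.neg)
    refine (hsub.submeanAt (hnhds hz hzp)).add_harmonicAt ?_ (hh z (interior_subset hz)).neg
    filter_upwards [eventually_mem_nhds_iff.2 (hnhds hz hzp)] with w hw
    exact hcont.continuousAt hw
  intro z hz hzp
  simpa using hdiff z hz hzp

theorem SubhOn.le_sSup_image_frontier (hsub : SubhOn f (U \ {p}))
    (hcont : ContinuousOn f (U \ {p})) (hgrowth : SubLogGrowthAt f p) (hD : IsCompact D)
    (hDU : D ⊆ U) (hp : p ∉ frontier D) : ∀ z ∈ D, z ≠ p → f z ≤ sSup (f '' frontier D) := by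
  have hfrD : frontier D ⊆ D := hD.isClosed.frontier_subset
  have hbdd : BddAbove (f '' frontier D) :=
    (hD.of_isClosed_subset isClosed_frontier hfrD).bddAbove_image
      (hcont.mono fun z hz ↦ ⟨hDU (hfrD hz), ne_of_mem_of_not_mem hz hp⟩)
  exact hsub.le_harmonic_of_frontier_le hcont hgrowth hD hDU (harmonicOnNhd_const _)
    continuousAt_const fun z hz _ ↦ le_csSup hbdd (mem_image_of_mem f hz)

lemma SubhOn.isBoundedUnder_le_of_subLogGrowthAt (hsub : SubhOn f (U \ {p}))
    (hcont : ContinuousOn f (U \ {p})) (hgrowth : SubLogGrowthAt f p) (hU : U ∈ 𝓝 p) :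
    (𝓝[≠] p).IsBoundedUnder (· ≤ ·) f := by
  obtain ⟨r, hr, hrU⟩ := nhds_basis_closedBall.mem_iff.1 hU
  have hp : p ∉ frontier (closedBall p r) := by simp [frontier_closedBall', hr.ne]
  refine isBoundedUnder_of_eventually_le (a := sSup (f '' frontier (closedBall p r))) ?_
  filter_upwards [self_mem_nhdsWithin, nhdsWithin_le_nhds (closedBall_mem_nhds p hr)]
    with z hzp hzr
  exact hsub.le_sSup_image_frontier hcont hgrowth (isCompact_closedBall p r) hrU hp z hzr hzp

/-! ### The extension across the puncture -/

open Classical in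
/-- The extension of `f` across the puncture `p` by its upper limit there. -/
noncomputable def limsupExtension {X : Type*} [TopologicalSpace X] (f : X → ℝ) (p : X) : X → ℝ :=
  Function.update f p (limsup f (𝓝[≠] p))

lemma limsupExtension_self {X : Type*} [TopologicalSpace X] (f : X → ℝ) (p : X) :
    limsupExtension f p p = limsup f (𝓝[≠] p) := by
  simp [limsupExtension]

lemma limsupExtension_of_ne {X : Type*} [TopologicalSpace X] (f : X → ℝ) {p z : X} (hz : z ≠ p) :
    limsupExtension f p z = f z := by
  simp [limsupExtension, hz]

lemma eqOn_limsupExtension {X : Type*} [TopologicalSpace X] (f : X → ℝ) {p : X} {s : Set X}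
    (hp : p ∉ s) : EqOn (limsupExtension f p) f s :=
  fun _ hz ↦ limsupExtension_of_ne f (ne_of_mem_of_not_mem hz hp)

lemma upperSemicontinuousOn_limsupExtension {X : Type*} [TopologicalSpace X] [T1Space X]
    {f : X → ℝ} {p : X} {s : Set X} (hf : UpperSemicontinuousOn f (s \ {p}))
    (hbdd : (𝓝[≠] p).IsBoundedUnder (· ≤ ·) f) :
    UpperSemicontinuousOn (limsupExtension f p) s := by
  intro z hz y hzy
  rcases eq_or_ne z p with rfl | hzp
  · have hlt : ∀ᶠ w in 𝓝[≠] z, f w < y :=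
      eventually_lt_of_limsup_lt (limsupExtension_self f z ▸ hzy) hbdd
    filter_upwards [nhdsWithin_le_nhds (eventually_nhdsWithin_iff.1 hlt)] with w hw
    rcases eq_or_ne w z with rfl | hwz
    · exact hzy
    · exact (limsupExtension_of_ne f hwz).trans_lt (hw hwz)
  · rw [limsupExtension_of_ne f hzp] at hzy
    have hlt : ∀ᶠ w in 𝓝[s \ {p}] z, f w < y := hf z ⟨hz, hzp⟩ y hzy
    rw [sdiff_eq, nhdsWithin_inter_of_mem'
      (nhdsWithin_le_nhds (isOpen_compl_singleton.mem_nhds hzp))] at hlt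
    filter_upwards [hlt, nhdsWithin_le_nhds (isOpen_ne.mem_nhds hzp)] with w hw hwp
    rwa [limsupExtension_of_ne f hwp]

lemma limsupExtension_le_of_forall_ne_le {X : Type*} [TopologicalSpace X] {f h : X → ℝ} {p z : X}
    {s : Set X} [(𝓝[≠] p).NeBot] (hbelow : (𝓝[≠] p).IsBoundedUnder (· ≥ ·) f)
    (hh : ContinuousAt h p) (hs : s ∈ 𝓝 p) (hle : ∀ w ∈ s, w ≠ p → f w ≤ h w) (hz : z ∈ s) :
    limsupExtension f p z ≤ h z := by
  rcases eq_or_ne z p with rfl | hzp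
  · have hlim : Tendsto h (𝓝[≠] z) (𝓝 (h z)) := hh.tendsto.mono_left nhdsWithin_le_nhds
    rw [limsupExtension_self, ← hlim.limsup_eq]
    refine limsup_le_limsup ?_ hbelow.isCoboundedUnder_le hlim.isBoundedUnder_le
    filter_upwards [self_mem_nhdsWithin, nhdsWithin_le_nhds hs] with w hwp hws
    exact hle w hws hwp
  · exact (limsupExtension_of_ne f hzp).trans_le (hle z hz hzp)

lemma limsupExtension_le_circleAverage_of_notMem_closedBall (hsub : SubhOn f (U \ {p}))
    (hR : 0 < R) (hU : closedBall c R ⊆ U) (hp : p ∉ closedBall c R) :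
    limsupExtension f p c ≤ circleAverage (limsupExtension f p) c R := by
  have heq := eqOn_limsupExtension f hp
  rw [heq (mem_closedBall_self hR.le), circleAverage_congr_sphere
    (heq.mono ((abs_of_pos hR).symm ▸ sphere_subset_closedBall))]
  exact hsub.le_circleAverage hR (subset_sdiff_singleton hU hp)

lemma limsupExtension_le_circleAverage_of_mem_ball (hsub : SubhOn f (U \ {p}))
    (hcont : ContinuousOn f (U \ {p})) (hgrowth : SubLogGrowthAt f p)
    (hbelow : (𝓝[≠] p).IsBoundedUnder (· ≥ ·) f) (hU : closedBall c R ⊆ U) (hp : p ∈ ball c R) :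
    limsupExtension f p c ≤ circleAverage (limsupExtension f p) c R := by
  have hR : 0 < R := pos_of_mem_ball hp
  have hpS : p ∉ sphere c R := fun h ↦ (mem_ball.1 hp).ne h
  have heq := eqOn_limsupExtension f hpS
  have hS : ContinuousOn f (sphere c R) :=
    hcont.mono (subset_sdiff_singleton (sphere_subset_closedBall.trans hU) hpS)
  refine le_circleAverage_of_forall_harmonic_le hR (hS.congr heq) fun h hh hfh ↦ ?_
  have hhp : ContinuousAt h p := (hh p trivial).1.continuousAt
  have hle : ∀ z ∈ closedBall c R, z ≠ p → f z ≤ h z :=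
    hsub.le_harmonic_of_frontier_le hcont hgrowth (isCompact_closedBall c R) hU
      (hh.mono (subset_univ _)) hhp fun z hz _ ↦ by
        rw [frontier_closedBall'] at hz
        exact heq hz ▸ hfh z hz
  exact limsupExtension_le_of_forall_ne_le hbelow hhp
    (mem_of_superset (isOpen_ball.mem_nhds hp) ball_subset_closedBall) hle
    (mem_closedBall_self hR.le)

lemma limsupExtension_le_circleAverage_of_mem_sphere (hsub : SubhOn f (U \ {p}))
    (hcont : ContinuousOn f (U \ {p})) (hbdd : (𝓝[≠] p).IsBoundedUnder (· ≤ ·) fun z ↦ |f z|)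
    (hR : 0 < R) (hU : closedBall c R ⊆ U) (hp : p ∈ sphere c R) :
    limsupExtension f p c ≤ circleAverage (limsupExtension f p) c R := by
  have hD : ContinuousOn f (closedBall c R \ {p}) := hcont.mono (sdiff_subset_sdiff_left hU)
  obtain ⟨M, hM⟩ := exists_norm_le_of_isBoundedUnder_nhdsNE (isCompact_closedBall c R) hD hbdd
  have hpB : p ∉ ball c R := fun h ↦ (mem_ball.1 h).ne hp
  have hlim : Tendsto (circleAverage (limsupExtension f p) c) (𝓝[<] R)
      (𝓝 (circleAverage (limsupExtension f p) c R)) := by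
    refine tendsto_circleAverage_nhdsLT (M := M) hR (countable_singleton p)
      (singleton_subset_iff.2 hp)
      (hD.congr (eqOn_limsupExtension f (notMem_sdiff_of_mem rfl))) fun z hz ↦ ?_
    rw [eqOn_limsupExtension f hpB hz]
    exact hM z ⟨ball_subset_closedBall hz, ne_of_mem_of_not_mem hz hpB⟩
  refine ge_of_tendsto hlim ?_
  filter_upwards [Ioo_mem_nhdsLT hR] with r hr
  exact limsupExtension_le_circleAverage_of_notMem_closedBall hsub hr.1
    ((closedBall_subset_closedBall hr.2.le).trans hU)
    fun h ↦ hpB (closedBall_subset_ball hr.2 h)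

theorem subhOn_limsupExtension (hU : U ∈ 𝓝 p) (hcont : ContinuousOn f (U \ {p}))
    (hbelow : (𝓝[≠] p).IsBoundedUnder (· ≥ ·) f) (hsub : SubhOn f (U \ {p}))
    (hgrowth : SubLogGrowthAt f p) : SubhOn (limsupExtension f p) U := by
  have habove := hsub.isBoundedUnder_le_of_subLogGrowthAt hcont hgrowth hU
  refine ⟨upperSemicontinuousOn_limsupExtension hsub.1 habove, fun c R hR hRU ↦ ?_⟩
  change _ ≤ circleAverage _ c R
  rcases lt_trichotomy (dist p c) R with hp | hp | hp
  · exact limsupExtension_le_circleAverage_of_mem_ball hsub hcont hgrowth hbelow hRU hp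
  · exact limsupExtension_le_circleAverage_of_mem_sphere hsub hcont
      (isBoundedUnder_le_abs.2 ⟨habove, hbelow⟩) hR hRU hp
  · exact limsupExtension_le_circleAverage_of_notMem_closedBall hsub hR hRU hp.not_ge

theorem stmt_13_general (hU : U ∈ 𝓝 p) (hcont : ContinuousOn f (U \ {p}))
    (hbelow : (𝓝[≠] p).IsBoundedUnder (· ≥ ·) f) (hsub : SubhOn f (U \ {p}))
    (hgrowth : SubLogGrowthAt f p) :
    (∃ g : ℂ → ℝ, SubhOn g U ∧ ∀ z ∈ U \ {p}, g z = f z) ∧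
    ∀ D ⊆ U, IsCompact D → p ∉ frontier D → ∀ z ∈ D, z ≠ p → f z ≤ sSup (f '' frontier D) :=
  ⟨⟨limsupExtension f p, subhOn_limsupExtension hU hcont hbelow hsub hgrowth,
    fun _ hz ↦ limsupExtension_of_ne f hz.2⟩,
    fun _ hDU hD hp ↦ hsub.le_sSup_image_frontier hcont hgrowth hD hDU hp⟩

end Puncture

/-- A continuous nonnegative subharmonic function on the punctured unit disk with
sub-logarithmic growth at the puncture extends subharmonically across the puncture,
and hence satisfies the maximum principle `sup_{Δ_{1/2}} δ ≤ sup_{|z|=1/2} δ`. -/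
theorem stmt_13 (δ : ℂ → ℝ)
    (hcont : ContinuousOn δ (ball (0:ℂ) 1 \ {0}))
    (hnonneg : ∀ z ∈ ball (0:ℂ) 1 \ {0}, 0 ≤ δ z)
    (hsub : SubhOn δ (ball (0:ℂ) 1 \ {0}))
    (hgrowth : ∀ ε > (0:ℝ), Filter.Tendsto (fun z : ℂ => δ z + ε * Real.log ‖z‖)
      (nhdsWithin 0 {z : ℂ | z ≠ 0}) Filter.atBot) :
    (∃ g : ℂ → ℝ, SubhOn g (ball (0:ℂ) 1) ∧ ∀ z ∈ ball (0:ℂ) 1 \ {0}, g z = δ z) ∧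
    ∀ z ∈ ball (0:ℂ) (1/2), z ≠ 0 → δ z ≤ sSup (δ '' sphere (0:ℂ) (1/2)) := by
  have hbelow : (𝓝[≠] (0 : ℂ)).IsBoundedUnder (· ≥ ·) δ :=
    isBoundedUnder_of_eventually_ge (a := 0) <| by
      filter_upwards [sdiff_mem_nhdsWithin_compl (ball_mem_nhds 0 one_pos) {0}] with z hz
      exact hnonneg z hz
  have hgrowth' : SubLogGrowthAt δ 0 := by
    simpa only [SubLogGrowthAt, sub_zero, compl_singleton_eq] using hgrowth
  obtain ⟨hext, hmax⟩ := stmt_13_general (ball_mem_nhds 0 one_pos) hcont hbelow hsub hgrowth'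
  refine ⟨hext, fun z hz hz0 ↦ ?_⟩
  have hmax_half := hmax (closedBall 0 (1 / 2)) (closedBall_subset_ball (by norm_num))
    (isCompact_closedBall 0 _)
  rw [frontier_closedBall'] at hmax_half
  exact hmax_half (by norm_num) z (ball_subset_closedBall hz) hz0
end
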